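/- Let n ∈ ℕ with n ≥ 2, let p ∈ (0,2], and let r ∈ ℝ with r² ≤ (p+n-2)/n. Then for all x ∈ ℝⁿ and all a ∈ ℝ, (∫_{S^{n-1}} |x + a r y|² dσ(y))^{1/2} ≤ (∫_{S^{n-1}} |x + a y|^p dσ(y))^{1/p}. -/

import Mathlib

open MeasureTheory Metric

/-- The normalized rotation-invariant (Haar) probability measure `σ` on the unit
sphere `S^{n-1} ⊆ ℝⁿ`. -/
noncomputable def sphereHaar (n : ℕ) :
    Measure (sphere (0 : EuclideanSpace ℝ (Fin n)) 1) :=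
  ((volume : Measure (EuclideanSpace ℝ (Fin n))).toSphere Set.univ)⁻¹ •
    (volume : Measure (EuclideanSpace ℝ (Fin n))).toSphere

/-!
Put `X z = ‖z‖² + ε` with `ε > 0`, let `q = p / 2 ≤ 1` and `m r = ∫ X (x + r y) ^ q dσ(y)`. Then
`m' = 2 q Φ`, where `Φ r` is the mean flux of the field `V z = X z ^ (q - 1) • z` through the sphere
of centre `x` and radius `r`. The rotation invariance of `σ` yields the divergence theorem in the
form `(r ^ (n - 1) Φ)' = r ^ (n - 1) ∫ div V (x + r y) dσ(y)`; it is obtained by differentiating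
integrals along the one-parameter groups of rotations. As
`div V ≥ (n + 2 (q - 1)) X ^ (q - 1)`, Jensen's inequality gives `∫ div V ≥ n c m ^ (1 - 1 / q)`
whenever `0 ≤ n c ≤ n + 2 (q - 1)`. Hence `Φ ≥ 0`, so `m ^ (1 - 1 / q)` decreases, and integration
gives `Φ ≥ c r m ^ (1 - 1 / q)`, that is, `(m ^ (1 / q))' ≥ 2 c r`. Integrating once more,
`‖x‖² + ε + c r² ≤ m r ^ (1 / q)`, and `ε → 0` gives the theorem, because
`∫ ‖x + b y‖² dσ(y) = ‖x‖² + b²`.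
-/

open Module Set InnerProductSpace
open scoped RealInnerProductSpace Pointwise

section RealVariable

lemma convexOn_rpow_of_nonpos {s : ℝ} (hs : s ≤ 0) :
    ConvexOn ℝ (Ioi 0) fun t : ℝ ↦ t ^ s := by
  have hlog : ConvexOn ℝ (Ioi 0) fun t : ℝ ↦ s * Real.log t := by
    simpa [Pi.smul_def] using (strictConcaveOn_log_Ioi.concaveOn.neg).smul (neg_nonneg.2 hs)
  refine ((convexOn_exp.subset (subset_univ _) ?_).comp hlog (Real.exp_monotone.monotoneOn _)).congr
    fun t ht ↦ ?_
  · exact (isPreconnected_Ioi.image _ fun t ht ↦ ((Real.continuousAt_log (ne_of_gt ht)).const_mul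
      s).continuousWithinAt).ordConnected.convex
  · rw [Function.comp_apply, Real.rpow_def_of_pos ht, mul_comm]

lemma rpow_integral_le_integral_rpow_of_nonpos {α : Type*} [MeasurableSpace α] {μ : Measure α}
    [IsProbabilityMeasure μ] {f : α → ℝ} {δ s : ℝ} (hs : s ≤ 0) (hδ : 0 < δ)
    (hδf : ∀ᵐ a ∂μ, δ ≤ f a) (hf : Integrable f μ) :
    (∫ a, f a ∂μ) ^ s ≤ ∫ a, f a ^ s ∂μ := by
  have hpos : Ici δ ⊆ Ioi 0 := Ici_subset_Ioi.2 hδ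
  refine ((convexOn_rpow_of_nonpos hs).subset hpos (convex_Ici δ)).map_integral_le
    (fun t ht ↦ (Real.continuousAt_rpow_const t s (.inl (hpos ht).ne')).continuousWithinAt)
    isClosed_Ici hδf hf ?_
  refine .of_bound (hf.aemeasurable.pow_const s).aestronglyMeasurable (δ ^ s) ?_
  filter_upwards [hδf] with a ha
  rw [Function.comp_apply, Real.norm_of_nonneg (Real.rpow_nonneg (hδ.le.trans ha) s)]
  exact Real.rpow_le_rpow_of_nonpos hδ ha hs

lemma integrable_of_continuous {S : Type*} [TopologicalSpace S] [CompactSpace S]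
    [MeasurableSpace S] [OpensMeasurableSpace S] {μ : Measure S} [IsFiniteMeasure μ]
    {F : Type*} [NormedAddCommGroup F] {f : S → F} (hf : Continuous f) : Integrable f μ :=
  hf.integrable_of_hasCompactSupport (.of_compactSpace _)

lemma hasDerivAt_integral_of_continuous {S : Type*} [TopologicalSpace S] [CompactSpace S]
    [MeasurableSpace S] [OpensMeasurableSpace S] {μ : Measure S} [IsFiniteMeasure μ]
    {F F' : ℝ → S → ℝ} (hF : ∀ r, Continuous (F r)) (hF' : Continuous (Function.uncurry F'))
    (hFF' : ∀ r y, HasDerivAt (F · y) (F' r y) r) (r : ℝ) :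
    HasDerivAt (fun r ↦ ∫ y, F r y ∂μ) (∫ y, F' r y ∂μ) r := by
  obtain ⟨C, hC⟩ := ((isCompact_closedBall r 1).prod isCompact_univ).exists_bound_of_continuousOn
    hF'.continuousOn
  exact (hasDerivAt_integral_of_dominated_loc_of_deriv_le (bound := fun _ ↦ C)
    (closedBall_mem_nhds r one_pos) (.of_forall fun t ↦ (hF t).aestronglyMeasurable)
    ((hF r).integrable_of_hasCompactSupport (.of_compactSpace _))
    (by fun_prop : Continuous (F' r)).aestronglyMeasurable
    (.of_forall fun y t ht ↦ hC (t, y) ⟨ht, mem_univ y⟩) (integrable_const C)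
    (.of_forall fun y t _ ↦ hFF' t y)).2

lemma monotoneOn_Ici_of_hasDerivAt_nonneg {f f' : ℝ → ℝ} (hf : ContinuousOn f (Ici 0))
    (hff' : ∀ r > 0, HasDerivAt f (f' r) r) (hf' : ∀ r > 0, 0 ≤ f' r) :
    MonotoneOn f (Ici 0) :=
  monotoneOn_of_hasDerivWithinAt_nonneg (convex_Ici 0) hf
    (fun r hr ↦ (hff' r (by simpa using hr)).hasDerivWithinAt)
    (fun r hr ↦ hf' r (by simpa using hr))

variable {d : ℕ} {c q : ℝ} {m Φ Ψ : ℝ → ℝ}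

lemma nonneg_of_hasDerivAt_pow_mul_nonneg (hΦ : Continuous Φ) (hΦ0 : Φ 0 = 0)
    (hΦd : ∀ r > 0, HasDerivAt (fun r ↦ r ^ d * Φ r) (Ψ r) r) (hΨ : ∀ r > 0, 0 ≤ Ψ r)
    {r : ℝ} (hr : 0 ≤ r) : 0 ≤ Φ r := by
  rcases hr.eq_or_lt with rfl | hr'
  · exact hΦ0.ge
  · have h := monotoneOn_Ici_of_hasDerivAt_nonneg (by fun_prop) hΦd hΨ self_mem_Ici hr hr
    simp only [hΦ0, mul_zero] at h
    exact nonneg_of_mul_nonneg_right h (pow_pos hr' d)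

lemma mul_rpow_le_of_hasDerivAt_pow_mul (hc : 0 ≤ c) (hq : q ∈ Ioc (0 : ℝ) 1)
    (hm : ∀ r, 0 < m r) (hmd : ∀ r, HasDerivAt m (2 * q * Φ r) r)
    (hΦ : Continuous Φ) (hΦ0 : Φ 0 = 0)
    (hΦd : ∀ r > 0, HasDerivAt (fun r ↦ r ^ d * Φ r) (Ψ r) r)
    (hΨ : ∀ r > 0, (d + 1) * c * r ^ d * m r ^ (1 - 1 / q) ≤ Ψ r) {r : ℝ} (hr : 0 ≤ r) :
    c * r * m r ^ (1 - 1 / q) ≤ Φ r := by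
  set s := 1 - 1 / q
  have hs : s ≤ 0 := sub_nonpos.2 (one_le_one_div hq.1 hq.2)
  have hΦnn : ∀ r > 0, 0 ≤ Φ r := fun r hr ↦
    nonneg_of_hasDerivAt_pow_mul_nonneg hΦ hΦ0 hΦd
      (fun t ht ↦ le_trans (by have := (hm t).le; positivity) (hΨ t ht)) hr.le
  have hmc : Continuous m := continuous_iff_continuousAt.2 fun r ↦ (hmd r).continuousAt
  have hmsd (r : ℝ) : HasDerivAt (fun r ↦ m r ^ s) (2 * q * Φ r * s * m r ^ (s - 1)) r :=
    (hmd r).rpow_const (.inl (hm r).ne')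
  have hdiff (r : ℝ) (hr : 0 < r) : HasDerivAt (fun r ↦ r ^ d * (Φ r - c * r * m r ^ s))
      (Ψ r - (d + 1) * c * r ^ d * m r ^ s
        - c * r ^ (d + 1) * (2 * q * Φ r * s * m r ^ (s - 1))) r := by
    refine HasDerivAt.congr_of_eventuallyEq (f := fun r ↦ r ^ d * Φ r - c * (r ^ (d + 1) * m r ^ s))
      (((hΦd r hr).sub (((hasDerivAt_pow (d + 1) r).mul (hmsd r)).const_mul c)).congr_deriv ?_)
      (.of_forall fun r ↦ by ring)
    push_cast [Nat.add_sub_cancel]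
    ring
  refine sub_nonneg.1 (nonneg_of_hasDerivAt_pow_mul_nonneg (Φ := fun r ↦ Φ r - c * r * m r ^ s)
    ?_ (by simp [hΦ0]) hdiff (fun r hr ↦ ?_) hr)
  · exact hΦ.sub ((by fun_prop : Continuous fun r ↦ c * r).mul
      (hmc.rpow_const fun r ↦ .inl (hm r).ne'))
  · have hcorrection : 0 ≤ c * r ^ (d + 1) * (2 * q * Φ r * -s * m r ^ (s - 1)) := by
      have := hq.1.le
      have := hΦnn r hr
      have := (hm r).le
      have := neg_nonneg.2 hs
      positivity
    linarith [hΨ r hr]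

lemma rpow_add_mul_sq_le_rpow_of_hasDerivAt (hc : 0 ≤ c) (hq : q ∈ Ioc (0 : ℝ) 1)
    (hm : ∀ r, 0 < m r) (hmd : ∀ r, HasDerivAt m (2 * q * Φ r) r)
    (hΦ : Continuous Φ) (hΦ0 : Φ 0 = 0)
    (hΦd : ∀ r > 0, HasDerivAt (fun r ↦ r ^ d * Φ r) (Ψ r) r)
    (hΨ : ∀ r > 0, (d + 1) * c * r ^ d * m r ^ (1 - 1 / q) ≤ Ψ r) {r : ℝ} (hr : 0 ≤ r) :
    m 0 ^ (1 / q) + c * r ^ 2 ≤ m r ^ (1 / q) := by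
  have hderiv (r : ℝ) : HasDerivAt (fun r ↦ m r ^ (1 / q) - c * r ^ 2)
      (2 * (Φ r * m r ^ (1 / q - 1) - c * r)) r := by
    refine (((hmd r).rpow_const (.inl (hm r).ne')).sub
      ((hasDerivAt_pow 2 r).const_mul c)).congr_deriv ?_
    have := hq.1.ne'
    field_simp
    push_cast
    ring
  have hnonneg (r : ℝ) (hr : 0 < r) : 0 ≤ 2 * (Φ r * m r ^ (1 / q - 1) - c * r) := by
    have h := mul_le_mul_of_nonneg_right
      (mul_rpow_le_of_hasDerivAt_pow_mul hc hq hm hmd hΦ hΦ0 hΦd hΨ hr.le)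
      (Real.rpow_nonneg (hm r).le (1 / q - 1))
    rw [mul_assoc, ← Real.rpow_add (hm r), sub_add_sub_cancel', sub_self, Real.rpow_zero,
      mul_one] at h
    linarith
  have h := monotoneOn_Ici_of_hasDerivAt_nonneg
    (fun r _ ↦ (hderiv r).continuousAt.continuousWithinAt) (fun r _ ↦ hderiv r) hnonneg
    self_mem_Ici hr hr
  simp only [ne_eq, OfNat.ofNat_ne_zero, not_false_eq_true, zero_pow, mul_zero, sub_zero] at h
  linarith

end RealVariable

lemma continuous_fderiv_apply_of_contDiff {E F G : Type*} [NormedAddCommGroup E] [NormedSpace ℝ E]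
    [NormedAddCommGroup F] [NormedSpace ℝ F] [TopologicalSpace G] {V : E → F} (hV : ContDiff ℝ 1 V)
    {f g : G → E} (hf : Continuous f) (hg : Continuous g) :
    Continuous fun z ↦ fderiv ℝ V (f z) (g z) :=
  ((hV.continuous_fderiv one_ne_zero).comp hf).clm_apply hg

section Divergence

variable {E : Type*} [NormedAddCommGroup E] [InnerProductSpace ℝ E]

lemma fderiv_inner_mul_apply {g : E → ℝ} {z : E} (hg : DifferentiableAt ℝ g z) (u v : E) :
    fderiv ℝ (fun z ↦ ⟪u, z⟫ * g z) z v = ⟪u, z⟫ * fderiv ℝ g z v + ⟪u, v⟫ * g z := by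
  have h : HasFDerivAt (fun z ↦ ⟪u, z⟫ * g z) (⟪u, z⟫ • fderiv ℝ g z + g z • innerSL ℝ u) z :=
    (innerSL ℝ u).hasFDerivAt.mul hg.hasFDerivAt
  rw [h.fderiv]
  simp [mul_comm]

lemma hasFDerivAt_rpow_norm_sq_add {ε : ℝ} (hε : 0 < ε) (s : ℝ) (z : E) :
    HasFDerivAt (fun z : E ↦ (‖z‖ ^ 2 + ε) ^ s)
      ((2 * s * (‖z‖ ^ 2 + ε) ^ (s - 1)) • innerSL ℝ z) z := by
  refine (((hasStrictFDerivAt_norm_sq z).hasFDerivAt.add_const ε).rpow_const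
    (.inl (by positivity))).congr_fderiv ?_
  ext v
  simp only [smul_apply, coe_innerSL_apply, nsmul_eq_mul, Nat.cast_ofNat, smul_eq_mul]
  ring

lemma contDiff_rpow_norm_sq_add {ε : ℝ} (hε : 0 < ε) (s : ℝ) :
    ContDiff ℝ 1 (fun z : E ↦ (‖z‖ ^ 2 + ε) ^ s) :=
  ((contDiff_norm_sq ℝ).add contDiff_const).rpow_const_of_ne fun z ↦ by positivity

/-- The divergence of a vector field, as the trace of its derivative. -/
noncomputable def divergence (V : E → E) (z : E) : ℝ :=
  LinearMap.trace ℝ E (fderiv ℝ V z)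

variable [FiniteDimensional ℝ E]

lemma continuous_divergence {V : E → E} (hV : ContDiff ℝ 1 V) : Continuous (divergence V) := by
  unfold divergence
  simp only [LinearMap.trace_eq_sum_inner _ (stdOrthonormalBasis ℝ E),
    ContinuousLinearMap.coe_coe]
  exact continuous_finsetSum _ fun i _ ↦ continuous_const.inner
    (continuous_fderiv_apply_of_contDiff hV continuous_id continuous_const)

lemma divergence_smul_self {f : E → ℝ} {z : E} (hf : DifferentiableAt ℝ f z) :
    divergence (fun z ↦ f z • z) z = finrank ℝ E * f z + fderiv ℝ f z z := by
  have h : HasFDerivAt (fun z ↦ f z • z)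
      (f z • ContinuousLinearMap.id ℝ E + (fderiv ℝ f z).smulRight z) z :=
    hf.hasFDerivAt.smul (hasFDerivAt_id z)
  rw [divergence, h.fderiv]
  simp [mul_comm]

lemma mul_rpow_le_divergence_rpow_norm_sq_add_smul {ε s : ℝ} (hε : 0 < ε) (hs : s ≤ 0) (z : E) :
    (finrank ℝ E + 2 * s) * (‖z‖ ^ 2 + ε) ^ s ≤
      divergence (fun z : E ↦ (‖z‖ ^ 2 + ε) ^ s • z) z := by
  have hX : 0 < ‖z‖ ^ 2 + ε := by positivity
  have hle : ‖z‖ ^ 2 * (‖z‖ ^ 2 + ε) ^ (s - 1) ≤ (‖z‖ ^ 2 + ε) ^ s := by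
    rw [Real.rpow_sub_one hX.ne', mul_div_left_comm]
    exact mul_le_of_le_one_right (by positivity) ((div_le_one hX).2 (by linarith))
  have h := hasFDerivAt_rpow_norm_sq_add hε s z
  rw [divergence_smul_self h.differentiableAt, h.fderiv]
  simp only [smul_apply, innerSL_apply_apply, real_inner_self_eq_norm_sq, smul_eq_mul]
  linarith [mul_le_mul_of_nonpos_left hle hs]

end Divergence

lemma finrank_pos_of_isProbabilityMeasure_sphere {E : Type*} [NormedAddCommGroup E]
    [NormedSpace ℝ E] [FiniteDimensional ℝ E] [MeasurableSpace E]
    (σ : Measure (sphere (0 : E) 1)) [IsProbabilityMeasure σ] : 0 < finrank ℝ E := by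
  obtain ⟨y⟩ := nonempty_of_isProbabilityMeasure σ
  have := nontrivial_of_ne (y : E) 0 (ne_zero_of_mem_unit_sphere y)
  exact finrank_pos

section OrthogonallyInvariant

variable {E : Type*} [NormedAddCommGroup E] [InnerProductSpace ℝ E] [MeasurableSpace E]
  [BorelSpace E]

/-- Invariance of a measure on the unit sphere under the orthogonal group, expressed through the
images of the measure in the ambient space, so that no action on the sphere has to be set up. -/
def IsOrthogonallyInvariant (σ : Measure (sphere (0 : E) 1)) : Prop :=
  ∀ R : E ≃ₗᵢ[ℝ] E, σ.map (fun y : sphere (0 : E) 1 ↦ R y) = σ.map Subtype.val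

variable {σ : Measure (sphere (0 : E) 1)}

lemma IsOrthogonallyInvariant.integral_comp_isometry (hσ : IsOrthogonallyInvariant σ)
    (R : E ≃ₗᵢ[ℝ] E) {g : E → ℝ} (hg : Continuous g) : ∫ y, g (R y) ∂σ = ∫ y, g y ∂σ := by
  rw [← integral_map (φ := fun y : sphere (0 : E) 1 ↦ R y)
    (by fun_prop : Continuous _).aemeasurable hg.aestronglyMeasurable, hσ R,
    integral_map continuous_subtype_val.aemeasurable hg.aestronglyMeasurable]

lemma IsOrthogonallyInvariant.integral_inner_eq_zero (hσ : IsOrthogonallyInvariant σ) (v : E) :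
    ∫ y : sphere (0 : E) 1, ⟪v, y⟫ ∂σ = 0 := by
  have h := hσ.integral_comp_isometry (LinearIsometryEquiv.neg ℝ) (g := fun z ↦ ⟪v, z⟫)
    (by fun_prop)
  simp only [LinearIsometryEquiv.coe_neg, inner_neg_right, integral_neg] at h
  linarith

variable [FiniteDimensional ℝ E]

lemma IsOrthogonallyInvariant.integral_fderiv_skewAdjoint_eq_zero [IsFiniteMeasure σ]
    (hσ : IsOrthogonallyInvariant σ) {A : E →L[ℝ] E} (hA : A ∈ skewAdjoint (E →L[ℝ] E))
    {g : E → ℝ} (hg : ContDiff ℝ 1 g) : ∫ y : sphere (0 : E) 1, fderiv ℝ g y (A y) ∂σ = 0 := by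
  let U (α : ℝ) : E →L[ℝ] E := NormedSpace.exp (α • A)
  let : NormedAlgebra ℚ (E →L[ℝ] E) := .restrictScalars ℚ ℝ _
  have hU (α : ℝ) : U α ∈ unitary (E →L[ℝ] E) :=
    NormedSpace.exp_mem_unitary_of_mem_skewAdjoint (skewAdjoint.smul_mem α hA)
  have hUd (α : ℝ) : HasDerivAt U (U α * A) α := hasDerivAt_exp_smul_const A α
  have hgc := hg.continuous
  have hconst (α : ℝ) : ∫ y : sphere (0 : E) 1, g (U α y) ∂σ = ∫ y : sphere (0 : E) 1, g y ∂σ :=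
    hσ.integral_comp_isometry (Unitary.linearIsometryEquiv ⟨U α, hU α⟩) hg.continuous
  have hderiv := hasDerivAt_integral_of_continuous (μ := σ)
    (F := fun α y ↦ g (U α y)) (F' := fun α y ↦ fderiv ℝ g (U α y) (U α (A y)))
    (fun α ↦ by fun_prop)
    (continuous_fderiv_apply_of_contDiff hg (by fun_prop) (by fun_prop))
    (fun α y ↦ (hg.differentiable one_ne_zero _).hasFDerivAt.comp_hasDerivAt α
      (by simpa using (hUd α).clm_apply (hasDerivAt_const α (y : E)))) 0
  simp only [hconst] at hderiv
  have hU0 : U 0 = 1 := by simp [U]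
  simpa [hU0] using hderiv.unique (hasDerivAt_const _ _)

lemma IsOrthogonallyInvariant.finrank_sub_one_mul_integral_inner_mul [IsFiniteMeasure σ]
    (hσ : IsOrthogonallyInvariant σ) (e : E) {g : E → ℝ} (hg : ContDiff ℝ 1 g) :
    (finrank ℝ E - 1) * ∫ y : sphere (0 : E) 1, ⟪e, y⟫ * g y ∂σ =
      ∫ y : sphere (0 : E) 1, (fderiv ℝ g y e - ⟪e, y⟫ * fderiv ℝ g y y) ∂σ := by
  let b := stdOrthonormalBasis ℝ E
  -- `A j` generates the rotations of the plane spanned by `e` and `b j`.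
  let A (j : Fin (finrank ℝ E)) : E →L[ℝ] E := rankOne ℝ e (b j) - rankOne ℝ (b j) e
  have hA (j) : A j ∈ skewAdjoint (E →L[ℝ] E) := by
    simp [A, skewAdjoint.mem_iff, ContinuousLinearMap.star_eq_adjoint]
  let G (j : Fin (finrank ℝ E)) (z : E) : ℝ := ⟪b j, z⟫ * g z
  have hG (j) : ContDiff ℝ 1 (G j) := (contDiff_const.inner ℝ contDiff_id).mul hg
  have hfderiv (j) (z : E) : fderiv ℝ (G j) z (A j z) =
      (⟪z, b j⟫ * ⟪b j, e⟫ - ⟪e, z⟫) * g z +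
        (⟪b j, z⟫ ^ 2 * fderiv ℝ g z e - ⟪e, z⟫ * fderiv ℝ g z (⟪b j, z⟫ • b j)) := by
    rw [fderiv_inner_mul_apply (hg.differentiable one_ne_zero z)]
    simp only [A, sub_apply, rankOne_apply, map_sub, map_smul, inner_sub_right,
      real_inner_smul_right, b.inner_eq_one, smul_eq_mul, real_inner_comm z (b j)]
    ring
  have hsum (y : sphere (0 : E) 1) : ∑ j, fderiv ℝ (G j) y (A j y) =
      fderiv ℝ g y e - ⟪e, y⟫ * fderiv ℝ g y y - (finrank ℝ E - 1) * (⟪e, y⟫ * g y) := by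
    simp only [hfderiv, Finset.sum_add_distrib, Finset.sum_sub_distrib, ← Finset.sum_mul,
      ← Finset.mul_sum, ← map_sum, b.sum_repr', b.sum_sq_inner_right, b.sum_inner_mul_inner,
      norm_eq_of_mem_sphere, Finset.sum_const, Finset.card_univ, Fintype.card_fin, nsmul_eq_mul,
      real_inner_comm e (y : E)]
    ring
  have hgc := hg.continuous
  have hDy := continuous_fderiv_apply_of_contDiff hg continuous_subtype_val
    (continuous_subtype_val (p := (· ∈ sphere (0 : E) 1)))
  have hzero : ∑ j, ∫ y : sphere (0 : E) 1, fderiv ℝ (G j) y (A j y) ∂σ = 0 :=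
    Finset.sum_eq_zero fun j _ ↦ hσ.integral_fderiv_skewAdjoint_eq_zero (hA j) (hG j)
  rw [← integral_finsetSum _ fun j _ ↦ integrable_of_continuous
    (continuous_fderiv_apply_of_contDiff (hG j) (by fun_prop) (by fun_prop))] at hzero
  simp only [hsum] at hzero
  rw [integral_sub (integrable_of_continuous (by fun_prop))
    (integrable_of_continuous (by fun_prop)), integral_const_mul] at hzero
  exact (sub_eq_zero.1 hzero).symm

lemma IsOrthogonallyInvariant.finrank_sub_one_mul_integral_inner [IsFiniteMeasure σ]
    (hσ : IsOrthogonallyInvariant σ) {W : E → E} (hW : ContDiff ℝ 1 W) :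
    (finrank ℝ E - 1) * ∫ y : sphere (0 : E) 1, ⟪W y, y⟫ ∂σ =
      ∫ y : sphere (0 : E) 1, (divergence W y - ⟪fderiv ℝ W y y, y⟫) ∂σ := by
  let b := stdOrthonormalBasis ℝ E
  have hg (i) : ContDiff ℝ 1 fun z ↦ ⟪b i, W z⟫ := contDiff_const.inner ℝ hW
  have hfderiv (i) (z v : E) : fderiv ℝ (fun z ↦ ⟪b i, W z⟫) z v = ⟪b i, fderiv ℝ W z v⟫ := by
    simp [fderiv_inner_apply ℝ (differentiableAt_const _) (hW.differentiable one_ne_zero z)]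
  have hsum (y v : E) : ∑ i, ⟪b i, y⟫ * ⟪b i, v⟫ = ⟪v, y⟫ := by
    simp_rw [real_inner_comm y, b.sum_inner_mul_inner]
  have hWc := hW.continuous
  have hDy := continuous_fderiv_apply_of_contDiff hW continuous_subtype_val
    (continuous_subtype_val (p := (· ∈ sphere (0 : E) 1)))
  calc (finrank ℝ E - 1) * ∫ y : sphere (0 : E) 1, ⟪W y, y⟫ ∂σ
      = ∑ i, (finrank ℝ E - 1) * ∫ y : sphere (0 : E) 1, ⟪b i, y⟫ * ⟪b i, W y⟫ ∂σ := by
        rw [← Finset.mul_sum, ← integral_finsetSum _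
          fun i _ ↦ integrable_of_continuous (by fun_prop)]
        simp only [hsum]
    _ = ∑ i, ∫ y : sphere (0 : E) 1,
          (⟪b i, fderiv ℝ W y (b i)⟫ - ⟪b i, y⟫ * ⟪b i, fderiv ℝ W y y⟫) ∂σ := by
        simp only [hσ.finrank_sub_one_mul_integral_inner_mul (b _) (hg _), hfderiv]
    _ = ∫ y : sphere (0 : E) 1, (divergence W y - ⟪fderiv ℝ W y y, y⟫) ∂σ := by
        rw [← integral_finsetSum _ fun i _ ↦ integrable_of_continuous (by fun_prop)]
        simp only [Finset.sum_sub_distrib, hsum, divergence, LinearMap.trace_eq_sum_inner _ b,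
          ContinuousLinearMap.coe_coe]

lemma hasDerivAt_integral_inner_add_smul [IsFiniteMeasure σ] {V : E → E} (hV : ContDiff ℝ 1 V)
    (x : E) (r : ℝ) :
    HasDerivAt (fun r ↦ ∫ y : sphere (0 : E) 1, ⟪V (x + r • y), y⟫ ∂σ)
      (∫ y : sphere (0 : E) 1, ⟪fderiv ℝ V (x + r • y) y, y⟫ ∂σ) r := by
  have hVc := hV.continuous
  have hDV : Continuous fun t : ℝ × sphere (0 : E) 1 ↦ fderiv ℝ V (x + t.1 • (t.2 : E)) t.2 :=
    continuous_fderiv_apply_of_contDiff hV (by fun_prop) (by fun_prop)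
  refine hasDerivAt_integral_of_continuous (F := fun r (y : sphere (0 : E) 1) ↦ ⟪V (x + r • y), y⟫)
    (F' := fun r y ↦ ⟪fderiv ℝ V (x + r • y) y, y⟫) (fun r ↦ by fun_prop)
    (hDV.inner (by fun_prop)) (fun r y ↦ ?_) r
  have h := (hV.differentiable one_ne_zero (x + r • (y : E))).hasFDerivAt.comp_hasDerivAt r
    (((hasDerivAt_id r).smul_const (y : E)).const_add x)
  simpa using h.inner ℝ (hasDerivAt_const r (y : E))

lemma IsOrthogonallyInvariant.hasDerivAt_pow_mul_integral_inner [IsFiniteMeasure σ]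
    (hσ : IsOrthogonallyInvariant σ) {V : E → E} (hV : ContDiff ℝ 1 V) (x : E) {d : ℕ}
    (hd : finrank ℝ E = d + 1) {r : ℝ} (hr : r ≠ 0) :
    HasDerivAt (fun r ↦ r ^ d * ∫ y : sphere (0 : E) 1, ⟪V (x + r • y), y⟫ ∂σ)
      (r ^ d * ∫ y : sphere (0 : E) 1, divergence V (x + r • (y : E)) ∂σ) r := by
  have hfderiv (z : E) : fderiv ℝ (fun z ↦ V (x + r • z)) z = r • fderiv ℝ V (x + r • z) := by
    rw [fderiv_comp_smul (f := fun z ↦ V (x + z)), fderiv_comp_add_left]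
  have hdiv : Continuous fun y : sphere (0 : E) 1 ↦ divergence V (x + r • (y : E)) :=
    (continuous_divergence hV).comp (by fun_prop)
  have hDV : Continuous fun y : sphere (0 : E) 1 ↦ fderiv ℝ V (x + r • (y : E)) y :=
    continuous_fderiv_apply_of_contDiff hV (by fun_prop) (by fun_prop)
  have hsphere : d * ∫ y : sphere (0 : E) 1, ⟪V (x + r • y), y⟫ ∂σ =
      r * (∫ y : sphere (0 : E) 1, divergence V (x + r • (y : E)) ∂σ -
        ∫ y : sphere (0 : E) 1, ⟪fderiv ℝ V (x + r • y) y, y⟫ ∂σ) := by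
    have h := hσ.finrank_sub_one_mul_integral_inner (W := fun z ↦ V (x + r • z))
      (hV.comp (by fun_prop))
    rw [hd, Nat.cast_succ, add_sub_cancel_right] at h
    rw [h, ← integral_sub (integrable_of_continuous hdiv)
      (integrable_of_continuous (by fun_prop)), ← integral_const_mul]
    simp [divergence, hfderiv, real_inner_smul_left, mul_sub]
  refine ((hasDerivAt_pow d r).mul (hasDerivAt_integral_inner_add_smul hV x r)).congr_deriv
    (mul_left_cancel₀ hr ?_)
  have hpow : d * r ^ (d - 1) * r = d * r ^ d := by cases d <;> simp [pow_succ, mul_assoc]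
  linear_combination r ^ d * hsphere +
    (∫ y : sphere (0 : E) 1, ⟪V (x + r • y), y⟫ ∂σ) * hpow

lemma hasDerivAt_integral_rpow_norm_sq_add [IsFiniteMeasure σ] {ε : ℝ} (hε : 0 < ε) (q : ℝ)
    (x : E) (r : ℝ) :
    HasDerivAt (fun r ↦ ∫ y : sphere (0 : E) 1, (‖x + r • (y : E)‖ ^ 2 + ε) ^ q ∂σ)
      (2 * q * ∫ y : sphere (0 : E) 1,
        ⟪(‖x + r • (y : E)‖ ^ 2 + ε) ^ (q - 1) • (x + r • (y : E)), y⟫ ∂σ) r := by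
  have hcont (s : ℝ) := (contDiff_rpow_norm_sq_add (E := E) hε s).continuous
  rw [← integral_const_mul]
  refine hasDerivAt_integral_of_continuous
    (F := fun r (y : sphere (0 : E) 1) ↦ (‖x + r • (y : E)‖ ^ 2 + ε) ^ q)
    (F' := fun r y ↦ 2 * q * ⟪(‖x + r • (y : E)‖ ^ 2 + ε) ^ (q - 1) • (x + r • (y : E)), (y : E)⟫)
    (fun r ↦ (hcont q).comp (by fun_prop : Continuous fun y : sphere (0 : E) 1 ↦ x + r • (y : E)))
    (continuous_const.mul ((((hcont (q - 1)).smul continuous_id).comp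
      (by fun_prop : Continuous fun t : ℝ × sphere (0 : E) 1 ↦ x + t.1 • (t.2 : E))).inner
      (by fun_prop))) (fun r y ↦ ?_) r
  have h := (hasFDerivAt_rpow_norm_sq_add hε q (x + r • (y : E))).comp_hasDerivAt r
    (((hasDerivAt_id r).smul_const (y : E)).const_add x)
  refine h.congr_deriv ?_
  rw [one_smul, smul_apply, innerSL_apply_apply, smul_eq_mul, real_inner_smul_left]
  ring

lemma mul_rpow_integral_le_integral_divergence [IsProbabilityMeasure σ] {q c ε : ℝ}
    (hq : q ∈ Ioc (0 : ℝ) 1) (hε : 0 < ε) (hc : 0 ≤ c) (hcq : c ≤ finrank ℝ E + 2 * (q - 1))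
    (x : E) (r : ℝ) :
    c * (∫ y : sphere (0 : E) 1, (‖x + r • (y : E)‖ ^ 2 + ε) ^ q ∂σ) ^ (1 - 1 / q) ≤
      ∫ y : sphere (0 : E) 1,
        divergence (fun z ↦ (‖z‖ ^ 2 + ε) ^ (q - 1) • z) (x + r • (y : E)) ∂σ := by
  have haffine : Continuous fun y : sphere (0 : E) 1 ↦ x + r • (y : E) := by fun_prop
  have hintegrable (s : ℝ) :
      Integrable (fun y : sphere (0 : E) 1 ↦ (‖x + r • (y : E)‖ ^ 2 + ε) ^ s) σ :=
    integrable_of_continuous ((contDiff_rpow_norm_sq_add hε s).continuous.comp haffine)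
  have hjensen : (∫ y : sphere (0 : E) 1, (‖x + r • (y : E)‖ ^ 2 + ε) ^ q ∂σ) ^ (1 - 1 / q) ≤
      ∫ y : sphere (0 : E) 1, (‖x + r • (y : E)‖ ^ 2 + ε) ^ (q - 1) ∂σ := by
    refine (rpow_integral_le_integral_rpow_of_nonpos (sub_nonpos.2 (one_le_one_div hq.1 hq.2))
      (Real.rpow_pos_of_pos hε q) (.of_forall fun y ↦ ?_) (hintegrable q)).trans_eq
      (integral_congr_ae (.of_forall fun y ↦ ?_))
    · exact Real.rpow_le_rpow hε.le (le_add_of_nonneg_left (by positivity)) hq.1.le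
    · simp only
      rw [← Real.rpow_mul (by positivity), mul_sub, mul_one, mul_one_div_cancel hq.1.ne']
  calc _ ≤ c * ∫ y : sphere (0 : E) 1, (‖x + r • (y : E)‖ ^ 2 + ε) ^ (q - 1) ∂σ := by gcongr
    _ = ∫ y : sphere (0 : E) 1, c * (‖x + r • (y : E)‖ ^ 2 + ε) ^ (q - 1) ∂σ :=
        (integral_const_mul _ _).symm
    _ ≤ _ := by
        refine integral_mono ((hintegrable _).const_mul c) (integrable_of_continuous
          ((continuous_divergence ((contDiff_rpow_norm_sq_add hε _).smul contDiff_id)).comp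
          haffine)) fun y ↦ ?_
        exact (mul_le_mul_of_nonneg_right hcq (by positivity)).trans
          (mul_rpow_le_divergence_rpow_norm_sq_add_smul hε (sub_nonpos.2 hq.2) _)

lemma integral_rpow_norm_sq_add_pos [IsProbabilityMeasure σ] {ε : ℝ} (hε : 0 < ε) (q : ℝ)
    (x : E) (r : ℝ) : 0 < ∫ y : sphere (0 : E) 1, (‖x + r • (y : E)‖ ^ 2 + ε) ^ q ∂σ := by
  have hpos (z : E) : 0 < (‖z‖ ^ 2 + ε) ^ q := by positivity
  have hintegrable : Integrable (fun y : sphere (0 : E) 1 ↦ (‖x + r • (y : E)‖ ^ 2 + ε) ^ q) σ :=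
    integrable_of_continuous ((contDiff_rpow_norm_sq_add hε q).continuous.comp (by fun_prop))
  rw [integral_pos_iff_support_of_nonneg (fun y ↦ (hpos _).le) hintegrable,
    Function.support_eq_univ fun y ↦ (hpos _).ne', measure_univ]
  exact one_pos

lemma IsOrthogonallyInvariant.norm_sq_add_add_mul_sq_le [IsProbabilityMeasure σ]
    (hσ : IsOrthogonallyInvariant σ) {q c ε : ℝ} (hq : q ∈ Ioc (0 : ℝ) 1) (hε : 0 < ε)
    (hc : 0 ≤ c) (hcq : finrank ℝ E * c ≤ finrank ℝ E + 2 * (q - 1)) (x : E) {a : ℝ}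
    (ha : 0 ≤ a) :
    ‖x‖ ^ 2 + ε + c * a ^ 2 ≤
      (∫ y : sphere (0 : E) 1, (‖x + a • (y : E)‖ ^ 2 + ε) ^ q ∂σ) ^ (1 / q) := by
  obtain ⟨d, hd⟩ := Nat.exists_eq_add_one.2 (finrank_pos_of_isProbabilityMeasure_sphere σ)
  have hV : ContDiff ℝ 1 fun z : E ↦ (‖z‖ ^ 2 + ε) ^ (q - 1) • z :=
    (contDiff_rpow_norm_sq_add hε _).smul contDiff_id
  have hm (r : ℝ) := integral_rpow_norm_sq_add_pos (σ := σ) hε q x r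
  have h := rpow_add_mul_sq_le_rpow_of_hasDerivAt hc hq hm
    (hasDerivAt_integral_rpow_norm_sq_add hε q x)
    (continuous_iff_continuousAt.2 fun r ↦
      (hasDerivAt_integral_inner_add_smul hV x r).continuousAt)
    (by simp [hσ.integral_inner_eq_zero])
    (fun r hr ↦ hσ.hasDerivAt_pow_mul_integral_inner hV x hd hr.ne')
    (fun r hr ↦ ?_) ha
  · have hpow : ((‖x‖ ^ 2 + ε) ^ q) ^ q⁻¹ = ‖x‖ ^ 2 + ε :=
      Real.rpow_rpow_inv (by positivity) hq.1.ne'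
    simpa [hpow] using h
  · have h := mul_rpow_integral_le_integral_divergence (σ := σ) hq hε (by positivity) hcq x r
    rw [hd] at h
    push_cast at h
    linarith [mul_le_mul_of_nonneg_left h (pow_nonneg hr.le d)]

lemma IsOrthogonallyInvariant.norm_sq_add_mul_sq_le [IsProbabilityMeasure σ]
    (hσ : IsOrthogonallyInvariant σ) {p c : ℝ} (hp : p ∈ Ioc (0 : ℝ) 2) (hc : 0 ≤ c)
    (hcp : finrank ℝ E * c ≤ p + finrank ℝ E - 2) (x : E) (a : ℝ) :
    ‖x‖ ^ 2 + c * a ^ 2 ≤ (∫ y : sphere (0 : E) 1, ‖x + a • (y : E)‖ ^ p ∂σ) ^ (2 / p) := by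
  wlog ha : 0 ≤ a generalizing x a
  · have h := this (-x) (-a) (by linarith)
    have hneg (y : E) : ‖-x + -a • y‖ = ‖x + a • y‖ := by rw [neg_smul, ← neg_add, norm_neg]
    simpa only [hneg, norm_neg, neg_sq] using h
  have hq : p / 2 ∈ Ioc (0 : ℝ) 1 := ⟨half_pos hp.1, (div_le_one two_pos).2 hp.2⟩
  have hcont : Continuous fun ε ↦
      (∫ y : sphere (0 : E) 1, (‖x + a • (y : E)‖ ^ 2 + ε) ^ (p / 2) ∂σ) ^ (1 / (p / 2)) := by
    refine Continuous.rpow_const ?_ fun _ ↦ .inr (one_div_nonneg.2 hq.1.le)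
    rw [← Measure.restrict_univ (μ := σ)]
    exact continuous_parametric_integral_of_continuous
      (.rpow_const (by fun_prop) fun _ ↦ .inr hq.1.le) isCompact_univ
  have hle := le_of_tendsto_of_tendsto
    ((by fun_prop : Continuous fun ε : ℝ ↦ ‖x‖ ^ 2 + ε + c * a ^ 2).continuousWithinAt
      (s := Ioi 0) (x := 0)) (hcont.continuousWithinAt (s := Ioi 0) (x := 0))
    (Filter.eventually_of_mem self_mem_nhdsWithin fun ε hε ↦
      hσ.norm_sq_add_add_mul_sq_le hq hε hc (by linarith) x ha)
  have hpow (t : E) : (‖t‖ ^ 2) ^ (p / 2) = ‖t‖ ^ p := by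
    rw [← Real.rpow_natCast_mul (norm_nonneg t)]
    congr 1
    push_cast
    ring
  simpa only [add_zero, hpow, one_div_div] using hle

lemma IsOrthogonallyInvariant.integral_norm_add_smul_sq [IsProbabilityMeasure σ]
    (hσ : IsOrthogonallyInvariant σ) (x : E) (b : ℝ) :
    ∫ y : sphere (0 : E) 1, ‖x + b • (y : E)‖ ^ 2 ∂σ = ‖x‖ ^ 2 + b ^ 2 := by
  have hexpand (y : sphere (0 : E) 1) :
      ‖x + b • (y : E)‖ ^ 2 = ‖x‖ ^ 2 + b ^ 2 + 2 * b * ⟪x, y⟫ := by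
    rw [norm_add_sq_real, norm_smul, norm_eq_of_mem_sphere, real_inner_smul_right, mul_one,
      Real.norm_eq_abs, sq_abs]
    ring
  simp only [hexpand]
  rw [integral_add (integrable_const _) (integrable_of_continuous (by fun_prop)),
    integral_const_mul, hσ.integral_inner_eq_zero]
  simp

theorem stmt_19_general [IsProbabilityMeasure σ] (hσ : IsOrthogonallyInvariant σ) {p : ℝ}
    (hp : p ∈ Ioc (0 : ℝ) 2) {r : ℝ} (hr : r ^ 2 ≤ (p + finrank ℝ E - 2) / finrank ℝ E)
    (x : E) (a : ℝ) :
    (∫ y : sphere (0 : E) 1, ‖x + (a * r) • (y : E)‖ ^ (2 : ℝ) ∂σ) ^ ((1 : ℝ) / 2) ≤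
      (∫ y : sphere (0 : E) 1, ‖x + a • (y : E)‖ ^ p ∂σ) ^ (1 / p) := by
  have hn : (0 : ℝ) < finrank ℝ E := mod_cast finrank_pos_of_isProbabilityMeasure_sphere σ
  have hle := hσ.norm_sq_add_mul_sq_le hp (sq_nonneg r)
    (by rwa [mul_comm, ← le_div_iff₀ hn]) x a
  simp only [Real.rpow_two, hσ.integral_norm_add_smul_sq]
  calc (‖x‖ ^ 2 + (a * r) ^ 2) ^ ((1 : ℝ) / 2)
      ≤ ((∫ y : sphere (0 : E) 1, ‖x + a • (y : E)‖ ^ p ∂σ) ^ (2 / p)) ^ ((1 : ℝ) / 2) := by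
        gcongr
        linarith
    _ = (∫ y : sphere (0 : E) 1, ‖x + a • (y : E)‖ ^ p ∂σ) ^ (1 / p) := by
        rw [← Real.rpow_mul (integral_nonneg fun y ↦ by positivity)]
        congr 1
        ring

end OrthogonallyInvariant

lemma isProbabilityMeasure_sphereHaar {n : ℕ} (hn : n ≠ 0) :
    IsProbabilityMeasure (sphereHaar n) := by
  have : Nonempty (Fin n) := ⟨⟨0, Nat.pos_of_ne_zero hn⟩⟩
  have : NeZero ((volume : Measure (EuclideanSpace ℝ (Fin n))).toSphere) :=
    ⟨Measure.toSphere_ne_zero _⟩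
  exact isProbabilityMeasureSMul

lemma isOrthogonallyInvariant_sphereHaar (n : ℕ) : IsOrthogonallyInvariant (sphereHaar n) := by
  intro R
  have hRc : Measurable fun y : sphere (0 : EuclideanSpace ℝ (Fin n)) 1 ↦ R y :=
    (by fun_prop : Continuous _).measurable
  rw [sphereHaar, Measure.map_smul, Measure.map_smul]
  congr 1
  ext s hs
  rw [Measure.map_apply hRc hs, Measure.map_apply measurable_subtype_coe hs,
    Measure.toSphere_apply' _ (hRc hs), Measure.toSphere_apply' _ (measurable_subtype_coe hs),
    ← R.measurePreserving.measure_preimage_equiv (f := R.toMeasurableEquiv)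
      (Ioo (0 : ℝ) 1 • (Subtype.val '' (Subtype.val ⁻¹' s)))]
  congr 2
  ext z
  simp only [mem_smul, mem_image, mem_preimage, Subtype.exists]
  constructor
  · rintro ⟨c, hc, _, ⟨y, hy, hys, rfl⟩, rfl⟩
    exact ⟨c, hc, R y, ⟨R y, by simpa using hy, hys, rfl⟩, by simp⟩
  · rintro ⟨c, hc, _, ⟨y, hy, hys, rfl⟩, h⟩
    exact ⟨c, hc, R.symm y, ⟨R.symm y, by simpa using hy, by simpa using hys, rfl⟩,
      R.injective (by simpa using h)⟩

theorem stmt_19 (n : ℕ) (hn : 2 ≤ n) (p : ℝ) (hp : p ∈ Set.Ioc (0 : ℝ) 2) (r : ℝ)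
    (hr : r ^ 2 ≤ (p + (n : ℝ) - 2) / n)
    (x : EuclideanSpace ℝ (Fin n)) (a : ℝ) :
    (∫ y : sphere (0 : EuclideanSpace ℝ (Fin n)) 1,
        ‖x + (a * r) • (y : EuclideanSpace ℝ (Fin n))‖ ^ (2 : ℝ) ∂(sphereHaar n)) ^ ((1 : ℝ) / 2) ≤
      (∫ y : sphere (0 : EuclideanSpace ℝ (Fin n)) 1,
        ‖x + a • (y : EuclideanSpace ℝ (Fin n))‖ ^ p ∂(sphereHaar n)) ^ (1 / p) := by
  have := isProbabilityMeasure_sphereHaar (n := n) (by lia)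
  exact stmt_19_general (isOrthogonallyInvariant_sphereHaar n) hp (by simpa using hr) x a
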